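/- arXiv:1709.07197 — 8 statements merged into one kernel-verified Lean document; each statement's English description precedes it below -/
import Mathlib

section
/- Let N ≥ 2 and let w : S^{N-1} → ℝ be a function with w(e) > 0 for every e ∈ S^{N-1}. Assume that for all e, ξ ∈ S^{N-1} with ⟨e,ξ⟩ > 0 one has w(e)·⟨e,ξ⟩ ≤ w(ξ). Then w is constant on S^{N-1}. -/
/-!
Two unit vectors `e`, `ξ` are joined by an arc of a great circle of some angle `θ ∈ [0, π]`.
Cutting it into `n` equal pieces and applying the inequality to each of them gives
`w e * cos (θ / n) ^ n ≤ w ξ`. Since `cos x ≥ 1 - x² / 2`, Bernoulli's inequality yields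
`cos (θ / n) ^ n ≥ 1 - θ² / (2 n)`, so `n → ∞` gives `w e ≤ w ξ`; then exchange `e` and `ξ`.
The dimension `N ≥ 2` ensures that antipodal points are joined by such an arc too.
-/

open scoped RealInnerProductSpace

section GreatCircle

variable {E : Type*} [NormedAddCommGroup E] [InnerProductSpace ℝ E]

lemma inner_arc (e v : E) (he : ‖e‖ = 1) (hv : ‖v‖ = 1) (hev : ⟪e, v⟫ = 0) (s t : ℝ) :
    ⟪Real.cos s • e + Real.sin s • v, Real.cos t • e + Real.sin t • v⟫ = Real.cos (t - s) := by
  have hve : ⟪v, e⟫ = 0 := by rw [real_inner_comm]; exact hev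
  simp only [inner_add_left, inner_add_right, real_inner_smul_left, real_inner_smul_right,
    real_inner_self_eq_norm_sq, he, hv, hev, hve, Real.cos_sub]
  ring

lemma norm_arc (e v : E) (he : ‖e‖ = 1) (hv : ‖v‖ = 1) (hev : ⟪e, v⟫ = 0) (t : ℝ) :
    ‖Real.cos t • e + Real.sin t • v‖ = 1 := by
  have h := inner_arc e v he hv hev t t
  rw [real_inner_self_eq_norm_sq, sub_self, Real.cos_zero] at h
  exact (pow_eq_one_iff_of_nonneg (norm_nonneg _) two_ne_zero).1 h

/-- In dimension at least two, any two unit vectors lie on a common great circle. -/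
lemma exists_arc [FiniteDimensional ℝ E] (hE : 2 ≤ Module.finrank ℝ E)
    (e ξ : E) (he : ‖e‖ = 1) (hξ : ‖ξ‖ = 1) :
    ∃ (v : E) (θ : ℝ), ‖v‖ = 1 ∧ ⟪e, v⟫ = 0 ∧ ξ = Real.cos θ • e + Real.sin θ • v := by
  have hee : ⟪e, e⟫ = 1 := by rw [real_inner_self_eq_norm_sq, he]; norm_num
  set a : ℝ := ⟪e, ξ⟫ with ha
  have ha1 : |a| ≤ 1 := by simpa [he, hξ] using abs_real_inner_le_norm e ξ
  obtain ⟨ha2, ha3⟩ := abs_le.1 ha1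
  set u : E := ξ - a • e with hu
  have hxu : ξ = a • e + u := by rw [hu]; abel
  have heu : ⟪e, u⟫ = 0 := by
    rw [hu, inner_sub_right, real_inner_smul_right, hee, ← ha]; ring
  have hnu : ‖u‖ ^ 2 = 1 - a ^ 2 := by
    rw [hu, norm_sub_sq_real, hξ, norm_smul, he, real_inner_smul_right, real_inner_comm, ← ha,
      Real.norm_eq_abs, mul_one, sq_abs]
    ring
  have hsin : Real.sin (Real.arccos a) = ‖u‖ := by
    rw [Real.sin_arccos, ← hnu, Real.sqrt_sq (norm_nonneg u)]
  have hcos : Real.cos (Real.arccos a) = a := Real.cos_arccos ha2 ha3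
  by_cases h0 : u = 0
  · -- Here `ξ = ± e`, and any unit vector orthogonal to `e` will do.
    have hne : (Submodule.span ℝ {e})ᗮ ≠ ⊥ := by
      intro h
      rw [Submodule.orthogonal_eq_bot_iff] at h
      have h1 : Module.finrank ℝ (Submodule.span ℝ {e}) = 1 :=
        finrank_span_singleton (by rintro rfl; simp at he)
      rw [h, finrank_top] at h1
      omega
    obtain ⟨x, hx, hx0⟩ := Submodule.exists_mem_ne_zero_of_ne_bot hne
    refine ⟨‖x‖⁻¹ • x, Real.arccos a, norm_smul_inv_norm (𝕜 := ℝ) hx0, ?_, ?_⟩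
    · rw [real_inner_smul_right, Submodule.mem_orthogonal_singleton_iff_inner_right.1 hx, mul_zero]
    · rw [hcos, hsin, h0, norm_zero, zero_smul, ← h0]; exact hxu
  · refine ⟨‖u‖⁻¹ • u, Real.arccos a, norm_smul_inv_norm (𝕜 := ℝ) h0, ?_, ?_⟩
    · rw [real_inner_smul_right, heu, mul_zero]
    · rw [hcos, hsin, smul_smul, mul_inv_cancel₀ (norm_ne_zero_iff.2 h0), one_smul]; exact hxu

end GreatCircle

/-- If `f 0 > 0` and `f` loses at most a factor `cos h` over every step `h` with `cos h > 0`, then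
`f` never drops below `f 0`: subdivide the interval from `0` to `θ` ever more finely. -/
lemma le_of_cos_steps (f : ℝ → ℝ) (hf : 0 < f 0)
    (hstep : ∀ s t : ℝ, 0 < Real.cos (t - s) → f s * Real.cos (t - s) ≤ f t) (θ : ℝ) :
    f 0 ≤ f θ := by
  have hiter : ∀ h : ℝ, 0 < Real.cos h → ∀ k : ℕ, f 0 * Real.cos h ^ k ≤ f (k * h) := by
    intro h hh k
    induction k with
    | zero => simp
    | succ k ih =>
      have h1 : ((k + 1 : ℕ) : ℝ) * h - k * h = h := by push_cast; ring
      have h2 := hstep (k * h) ((k + 1 : ℕ) * h) (by rwa [h1])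
      rw [h1] at h2
      calc f 0 * Real.cos h ^ (k + 1) = f 0 * Real.cos h ^ k * Real.cos h := by ring
        _ ≤ f (k * h) * Real.cos h := mul_le_mul_of_nonneg_right ih hh.le
        _ ≤ _ := h2
  have hlim : Filter.Tendsto (fun n : ℕ => f 0 * (1 - θ ^ 2 / 2 / n)) Filter.atTop
      (nhds (f 0 * (1 - 0))) :=
    (tendsto_const_nhds.sub (tendsto_const_div_atTop_nhds_zero_nat _)).const_mul _
  rw [sub_zero, mul_one] at hlim
  refine le_of_tendsto hlim ?_
  obtain ⟨m, hm⟩ := exists_nat_gt |θ|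
  filter_upwards [Filter.eventually_ge_atTop m] with n hn
  have hnθ : |θ| < n := hm.trans_le (by exact_mod_cast hn)
  have hn0 : (0 : ℝ) < n := (abs_nonneg θ).trans_lt hnθ
  have hsq : (θ / n) ^ 2 < 1 := by
    rw [sq_lt_one_iff_abs_lt_one, abs_div, abs_of_pos hn0, div_lt_one hn0]
    exact hnθ
  have hc := Real.one_sub_sq_div_two_le_cos (x := θ / n)
  have key := hiter (θ / n) (by linarith) n
  rw [mul_div_cancel₀ θ hn0.ne'] at key
  refine le_trans (mul_le_mul_of_nonneg_left ?_ hf.le) key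
  calc 1 - θ ^ 2 / 2 / n = 1 + n * (-((θ / n) ^ 2 / 2)) := by field_simp; ring
    _ ≤ (1 + -((θ / n) ^ 2 / 2)) ^ n := one_add_mul_le_pow (by linarith) n
    _ ≤ Real.cos (θ / n) ^ n := pow_le_pow_left₀ (by linarith) (by linarith) n

/-- If `w` is positive on the unit sphere of `ℝ^N` (`N ≥ 2`) and satisfies
`w e * ⟪e, ξ⟫ ≤ w ξ` whenever `⟪e, ξ⟫ > 0`, then `w` is constant on the sphere. -/
theorem stmt_0 (N : ℕ) (hN : 2 ≤ N)
    (w : EuclideanSpace ℝ (Fin N) → ℝ)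
    (hpos : ∀ e : EuclideanSpace ℝ (Fin N), ‖e‖ = 1 → 0 < w e)
    (hineq : ∀ e ξ : EuclideanSpace ℝ (Fin N), ‖e‖ = 1 → ‖ξ‖ = 1 →
      0 < ⟪e, ξ⟫ → w e * ⟪e, ξ⟫ ≤ w ξ) :
    ∀ e ξ : EuclideanSpace ℝ (Fin N), ‖e‖ = 1 → ‖ξ‖ = 1 → w e = w ξ := by
  have main : ∀ e ξ : EuclideanSpace ℝ (Fin N), ‖e‖ = 1 → ‖ξ‖ = 1 → w e ≤ w ξ := by
    intro e ξ he hξ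
    obtain ⟨v, θ, hv, hev, rfl⟩ := exists_arc (by simpa using hN) e ξ he hξ
    have h := le_of_cos_steps (fun t => w (Real.cos t • e + Real.sin t • v))
      (hpos _ (norm_arc e v he hv hev 0))
      (fun s t hst => by
        rw [← inner_arc e v he hv hev s t] at hst ⊢
        exact hineq _ _ (norm_arc e v he hv hev s) (norm_arc e v he hv hev t) hst) θ
    simpa using h
  exact fun e ξ he hξ => le_antisymm (main e ξ he hξ) (main ξ e hξ he)
end

section
/- Let N ≥ 2 and let w : S^{N-1} → ℝ be positive and satisfy w(e)·⟨e,ξ⟩ ≤ w(ξ) for all e, ξ ∈ S^{N-1} with ⟨e,ξ⟩ > 0. Then for all ξ₀, ξ ∈ S^{N-1} with ⟨ξ₀,ξ⟩ > 0, setting ω := arccos(⟨ξ₀,ξ⟩) ∈ [0, π/2), one has for every integer M ≥ 1: w(ξ₀) ≤ w(ξ) / (cos(ω/M))^M. -/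
/-!
The unit vectors `p k = cos (k θ) ξ₀ + sin (k θ) η`, with `θ = ω / M` and `η` the unit tangent at
`ξ₀` pointing towards `ξ`, subdivide the great-circle arc from `ξ₀ = p 0` to `ξ = p M`. By the
addition formula for the cosine, consecutive points have inner product `cos θ`, which is positive
since `θ ≤ ω < π / 2`. Applying the hypothesis on `w` to each consecutive pair gives
`w ξ₀ * cos θ ^ M ≤ w ξ`. The tangent `η` is undefined when `ω = 0`, but then `ξ = ξ₀`.
-/

open scoped RealInnerProductSpace

/-- Points of a great circle parametrized by arc length have inner product the cosine of the
difference of their parameters. -/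
lemma inner_greatCircle {E : Type*} [NormedAddCommGroup E] [InnerProductSpace ℝ E]
    (a b : E) (ha : ‖a‖ = 1) (hb : ‖b‖ = 1) (hab : ⟪a, b⟫ = 0) (s t : ℝ) :
    ⟪Real.cos s • a + Real.sin s • b, Real.cos t • a + Real.sin t • b⟫ = Real.cos (t - s) := by
  have hba : ⟪b, a⟫ = 0 := by rw [real_inner_comm, hab]
  simp only [inner_add_left, inner_add_right, real_inner_smul_left, real_inner_smul_right,
    real_inner_self_eq_norm_sq, ha, hb, hab, hba, Real.cos_sub]
  ring

/-- The great-circle arc between two distinct, non-antipodal unit vectors has a unit tangent at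
its starting point. -/
lemma exists_tangent {E : Type*} [NormedAddCommGroup E] [InnerProductSpace ℝ E]
    (a x : E) (ha : ‖a‖ = 1) (hx : ‖x‖ = 1) (ω : ℝ) (hω : ⟪a, x⟫ = Real.cos ω)
    (hs : Real.sin ω ≠ 0) :
    ∃ b : E, ‖b‖ = 1 ∧ ⟪a, b⟫ = 0 ∧ Real.cos ω • a + Real.sin ω • b = x := by
  have hω' : ⟪x, a⟫ = Real.cos ω := by rw [real_inner_comm, hω]
  refine ⟨(Real.sin ω)⁻¹ • (x - Real.cos ω • a), ?_, ?_, ?_⟩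
  · have hsq : ‖x - Real.cos ω • a‖ ^ 2 = Real.sin ω ^ 2 := by
      rw [norm_sub_sq_real, real_inner_smul_right, hω', hx, norm_smul, ha, mul_one,
        Real.norm_eq_abs, sq_abs]
      linarith [Real.sin_sq_add_cos_sq ω]
    have h : ‖(Real.sin ω)⁻¹ • (x - Real.cos ω • a)‖ ^ 2 = 1 := by
      rw [norm_smul, mul_pow, hsq, Real.norm_eq_abs, sq_abs, inv_pow,
        inv_mul_cancel₀ (pow_ne_zero 2 hs)]
    exact (pow_eq_one_iff_of_nonneg (norm_nonneg _) two_ne_zero).1 h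
  · simp [inner_sub_right, real_inner_smul_right, hω, ha]
  · rw [smul_inv_smul₀ hs]
    abel

/-- The iterated chain inequality: under the hypotheses of Proposition 1, for unit vectors
`ξ₀, ξ` with positive inner product and `ω = arccos ⟪ξ₀, ξ⟫`, one has
`w ξ₀ ≤ w ξ / (cos (ω / M)) ^ M` for every integer `M ≥ 1`. -/
theorem stmt_1 (N : ℕ) (hN : 2 ≤ N)
    (w : EuclideanSpace ℝ (Fin N) → ℝ)
    (hpos : ∀ e : EuclideanSpace ℝ (Fin N), ‖e‖ = 1 → 0 < w e)
    (hineq : ∀ e ξ : EuclideanSpace ℝ (Fin N), ‖e‖ = 1 → ‖ξ‖ = 1 →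
      0 < ⟪e, ξ⟫ → w e * ⟪e, ξ⟫ ≤ w ξ)
    (ξ₀ ξ : EuclideanSpace ℝ (Fin N)) (hξ₀ : ‖ξ₀‖ = 1) (hξ : ‖ξ‖ = 1)
    (hip : 0 < ⟪ξ₀, ξ⟫) (M : ℕ) (hM : 1 ≤ M) :
    w ξ₀ ≤ w ξ / (Real.cos (Real.arccos ⟪ξ₀, ξ⟫ / M)) ^ M := by
  have hle : ⟪ξ₀, ξ⟫ ≤ 1 := by
    simpa [hξ₀, hξ] using real_inner_le_norm ξ₀ ξ
  have hcos : ⟪ξ₀, ξ⟫ = Real.cos (Real.arccos ⟪ξ₀, ξ⟫) :=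
    (Real.cos_arccos (by linarith) hle).symm
  have hω0 := Real.arccos_nonneg ⟪ξ₀, ξ⟫
  have hω2 : Real.arccos ⟪ξ₀, ξ⟫ < Real.pi / 2 := Real.arccos_lt_pi_div_two.2 hip
  generalize Real.arccos ⟪ξ₀, ξ⟫ = ω at hcos hω0 hω2 ⊢
  have hM1 : (1 : ℝ) ≤ M := by exact_mod_cast hM
  rcases hω0.eq_or_lt with rfl | hωpos
  · have h : ξ₀ = ξ := (inner_eq_one_iff_of_norm_eq_one hξ₀ hξ).1 (by simpa using hcos)
    simp [h]
  have hs : Real.sin ω ≠ 0 :=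
    (Real.sin_pos_of_pos_of_lt_pi hωpos (by linarith [Real.pi_pos])).ne'
  obtain ⟨η, hη, hort, hend⟩ := exists_tangent ξ₀ ξ hξ₀ hξ ω hcos hs
  have hθ0 : 0 ≤ ω / M := by positivity
  have hθ : ω / M ≤ ω := div_le_self hω0 hM1
  have hc : 0 < Real.cos (ω / M) :=
    Real.cos_pos_of_mem_Ioo ⟨by linarith [Real.pi_pos], by linarith⟩
  have hMθ : (M : ℝ) * (ω / M) = ω := by field_simp
  generalize ω / M = θ at hθ0 hθ hc hMθ ⊢
  have hin := inner_greatCircle ξ₀ η hξ₀ hη hort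
  have hnorm : ∀ t : ℝ, ‖Real.cos t • ξ₀ + Real.sin t • η‖ = 1 := fun t => by
    rw [norm_eq_sqrt_real_inner, hin]
    simp
  have chain : ∀ k : ℕ, w ξ₀ * Real.cos θ ^ k ≤
      w (Real.cos (k * θ) • ξ₀ + Real.sin (k * θ) • η) := by
    intro k
    induction k with
    | zero => simp
    | succ k ih =>
      have hstep : ⟪Real.cos (k * θ) • ξ₀ + Real.sin (k * θ) • η,
          Real.cos ((k + 1 : ℕ) * θ) • ξ₀ + Real.sin ((k + 1 : ℕ) * θ) • η⟫ = Real.cos θ := by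
        rw [hin]
        congr 1
        push_cast
        ring
      have h := hineq _ _ (hnorm (k * θ)) (hnorm ((k + 1 : ℕ) * θ)) (by rwa [hstep])
      rw [hstep] at h
      rw [pow_succ, ← mul_assoc]
      exact (mul_le_mul_of_nonneg_right ih hc.le).trans h
  have h := chain M
  rw [hMθ, hend] at h
  exact (le_div_iff₀ (pow_pos hc M)).2 h
end

section
/- Let N ≥ 2 and let c : S^{N-1} → ℝ be a function (no continuity assumed) such that there exists m > 0 with c(e) ≥ m for every e ∈ S^{N-1}. Define w : S^{N-1} → ℝ by w(ξ) := inf{ c(e)/⟨e,ξ⟩ : e ∈ S^{N-1}, ⟨e,ξ⟩ > 0 }. Then w is continuous on S^{N-1}. -/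
/-!
The reciprocal of `w` on the sphere is `ξ ↦ sup_e ⟪e, ξ⟫ / c e`, a supremum of linear functions of
`ξ`, each Lipschitz with constant `1 / c e ≤ 1 / m`. Hence `w⁻¹` is Lipschitz with constant `1 / m`
(inequality `hkey` below), and as `w ≥ m > 0` on the sphere, `w` itself is continuous there.
-/

open scoped RealInnerProductSpace

/-- If `c` is bounded below by `m > 0` on the unit sphere of `ℝ^N` (`N ≥ 2`), then
`w ξ := inf { c e / ⟪e, ξ⟫ : ‖e‖ = 1, ⟪e, ξ⟫ > 0 }` is continuous on the sphere. -/
theorem stmt_4 (N : ℕ) (hN : 2 ≤ N)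
    (c : EuclideanSpace ℝ (Fin N) → ℝ) (m : ℝ) (hm : 0 < m)
    (hc : ∀ e : EuclideanSpace ℝ (Fin N), ‖e‖ = 1 → m ≤ c e)
    (w : EuclideanSpace ℝ (Fin N) → ℝ)
    (hw : ∀ ξ : EuclideanSpace ℝ (Fin N), w ξ =
      sInf {r : ℝ | ∃ e : EuclideanSpace ℝ (Fin N),
        ‖e‖ = 1 ∧ 0 < ⟪e, ξ⟫ ∧ r = c e / ⟪e, ξ⟫}) :
    ContinuousOn w (Metric.sphere (0 : EuclideanSpace ℝ (Fin N)) 1) := by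
  -- On the sphere the infimum is over a nonempty set: `e = ξ` is admissible.
  have le_w : ∀ ξ : EuclideanSpace ℝ (Fin N), ‖ξ‖ = 1 → ∀ K : ℝ,
      (∀ e : EuclideanSpace ℝ (Fin N), ‖e‖ = 1 → 0 < ⟪e, ξ⟫ → K ≤ c e / ⟪e, ξ⟫) → K ≤ w ξ := by
    intro ξ hξ K hK
    rw [hw]
    refine le_csInf ⟨_, ξ, hξ, ?_, rfl⟩ ?_
    · rw [real_inner_self_eq_norm_sq, hξ]; norm_num
    · rintro r ⟨e, he, hpos, rfl⟩
      exact hK e he hpos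
  have w_le : ∀ ξ e : EuclideanSpace ℝ (Fin N), ‖e‖ = 1 → 0 < ⟪e, ξ⟫ →
      w ξ ≤ c e / ⟪e, ξ⟫ := by
    intro ξ e he hpos
    rw [hw]
    refine csInf_le ⟨0, ?_⟩ ⟨e, he, hpos, rfl⟩
    rintro r ⟨e', he', hpos', rfl⟩
    exact div_nonneg (hm.le.trans (hc e' he')) hpos'.le
  have m_le_w : ∀ ξ : EuclideanSpace ℝ (Fin N), ‖ξ‖ = 1 → m ≤ w ξ := by
    intro ξ hξ
    refine le_w ξ hξ m fun e he hpos => ?_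
    rw [le_div_iff₀ hpos]
    have h1 : ⟪e, ξ⟫ ≤ 1 := by simpa [he, hξ] using real_inner_le_norm e ξ
    nlinarith [hc e he]
  have hkey : ∀ ξ η : EuclideanSpace ℝ (Fin N), ‖ξ‖ = 1 → ‖η‖ = 1 →
      (w η)⁻¹ ≤ (w ξ)⁻¹ + m⁻¹ * dist η ξ := by
    intro ξ η hξ hη
    have hwξ : 0 < w ξ := hm.trans_le (m_le_w ξ hξ)
    have hB : 0 < (w ξ)⁻¹ + m⁻¹ * dist η ξ := by positivity
    refine inv_le_of_inv_le₀ hB (le_w η hη _ fun e he hpos => ?_)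
    have hce : 0 < c e := hm.trans_le (hc e he)
    rw [inv_le_comm₀ hB (div_pos hce hpos), inv_div, div_le_iff₀ hce]
    -- When `⟪e, ξ⟫ ≤ 0` the direction `e` is not admissible for `ξ`, but the bound is trivial.
    have h1 : ⟪e, ξ⟫ ≤ (w ξ)⁻¹ * c e := by
      rcases le_or_gt ⟪e, ξ⟫ 0 with h | h
      · exact h.trans (by positivity)
      · have h2 := w_le ξ e he h
        rw [le_div_iff₀ h] at h2
        rwa [inv_mul_eq_div, le_div_iff₀ hwξ, mul_comm]
    have h2 : ⟪e, η⟫ - ⟪e, ξ⟫ ≤ dist η ξ := by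
      rw [← inner_sub_right, dist_eq_norm]
      simpa [he] using real_inner_le_norm e (η - ξ)
    have h3 : dist η ξ ≤ m⁻¹ * dist η ξ * c e := by
      have h4 : dist η ξ * m ≤ dist η ξ * c e :=
        mul_le_mul_of_nonneg_left (hc e he) dist_nonneg
      rwa [mul_assoc, inv_mul_eq_div, le_div_iff₀ hm]
    linarith
  have hlip : LipschitzOnWith (Real.toNNReal m⁻¹) (fun ξ => (w ξ)⁻¹)
      (Metric.sphere (0 : EuclideanSpace ℝ (Fin N)) 1) := by
    refine LipschitzOnWith.of_le_add_mul' _ fun η hη ξ hξ => ?_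
    exact hkey ξ η (by simpa using hξ) (by simpa using hη)
  have hinv := hlip.continuousOn.inv₀ fun ξ hξ =>
    inv_ne_zero (hm.trans_le (m_le_w ξ (by simpa using hξ))).ne'
  exact hinv.congr fun ξ _ => (inv_inv (w ξ)).symm
end

section
/- Let N ≥ 2, e ∈ S^{N-1}, and let R : ℝ^N → ℝ^N be the linear map Rx := 2⟨x,e⟩e − x. Let c : S^{N-1} → ℝ be lower semicontinuous with c ≥ m for some m > 0, and suppose c(Rξ) = c(ξ) for all ξ ∈ S^{N-1}. Assume moreover the cone inequality: for all ξ₁, ξ₂, e' ∈ S^{N-1} such that e' = λ₁ξ₁ + λ₂ξ₂ for some λ₁, λ₂ ≥ 0 and ⟨e',ξ₁⟩ > 0, ⟨e',ξ₂⟩ > 0, one has c(e') ≤ max( c(ξ₁)/⟨e',ξ₁⟩ , c(ξ₂)/⟨e',ξ₂⟩ ). Then c(e) = inf{ c(ξ)/⟨e,ξ⟩ : ξ ∈ S^{N-1}, ⟨e,ξ⟩ > 0 }. -/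
/-! The infimum is attained at `ξ = e`, where the quotient is `c e`. For any other admissible `ξ`,
the cone inequality applied to the pair `ξ`, `R ξ`, whose bisector is directed by `e`, gives
`c e ≤ c ξ / ⟪e, ξ⟫`, because `R` preserves both `c` and the inner product with `e`.
Thus `c e` is the least element of the set of quotients. -/

open scoped RealInnerProductSpace

/-- Geometric core of Theorem 3: if `c` is lower semicontinuous, bounded below by `m > 0`,
invariant under the reflection/rotation `R x = 2⟪x, e⟫ e - x`, and satisfies the cone
inequality, then `c e` equals the Freidlin–Gartner infimum at `e`. -/
theorem stmt_7 (N : ℕ) (hN : 2 ≤ N)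
    (e : EuclideanSpace ℝ (Fin N)) (he : ‖e‖ = 1)
    (R : EuclideanSpace ℝ (Fin N) → EuclideanSpace ℝ (Fin N))
    (hR : ∀ x : EuclideanSpace ℝ (Fin N), R x = (2 * ⟪x, e⟫) • e - x)
    (c : EuclideanSpace ℝ (Fin N) → ℝ) (m : ℝ) (hm : 0 < m)
    (hcm : ∀ ξ : EuclideanSpace ℝ (Fin N), ‖ξ‖ = 1 → m ≤ c ξ)
    (hlsc : LowerSemicontinuousOn c (Metric.sphere (0 : EuclideanSpace ℝ (Fin N)) 1))
    (hsym : ∀ ξ : EuclideanSpace ℝ (Fin N), ‖ξ‖ = 1 → c (R ξ) = c ξ)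
    (hcone : ∀ ξ₁ ξ₂ e' : EuclideanSpace ℝ (Fin N), ‖ξ₁‖ = 1 → ‖ξ₂‖ = 1 → ‖e'‖ = 1 →
      (∃ l₁ l₂ : ℝ, 0 ≤ l₁ ∧ 0 ≤ l₂ ∧ e' = l₁ • ξ₁ + l₂ • ξ₂) →
      0 < ⟪e', ξ₁⟫ → 0 < ⟪e', ξ₂⟫ →
      c e' ≤ max (c ξ₁ / ⟪e', ξ₁⟫) (c ξ₂ / ⟪e', ξ₂⟫)) :
    c e = sInf {r : ℝ | ∃ ξ : EuclideanSpace ℝ (Fin N),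
      ‖ξ‖ = 1 ∧ 0 < ⟪e, ξ⟫ ∧ r = c ξ / ⟪e, ξ⟫} := by
  have hee : ⟪e, e⟫ = 1 := by rw [real_inner_self_eq_norm_sq, he, one_pow]
  symm
  apply IsLeast.csInf_eq
  refine ⟨⟨e, he, by rw [hee]; exact one_pos, by rw [hee, div_one]⟩, ?_⟩
  -- `e` is the positive multiple `(ξ + R ξ) / (2⟪e, ξ⟫)` of the sum of `ξ` and its image `R ξ`,
  -- and both make the same angle with `e`, so the two entries of the maximum coincide.
  rintro r ⟨ξ, hξ, hpos, rfl⟩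
  have hinner : ⟪e, R ξ⟫ = ⟪e, ξ⟫ := by
    rw [hR, inner_sub_right, inner_smul_right, hee, real_inner_comm e ξ]
    ring
  have hnorm : ‖R ξ‖ = 1 := by
    have h : ‖R ξ‖ ^ 2 = 1 := by
      rw [hR, norm_sub_sq_real, norm_smul, mul_pow, Real.norm_eq_abs, sq_abs, he, hξ,
        inner_smul_left, real_inner_comm e ξ]
      simp only [conj_trivial]
      ring
    exact (pow_eq_one_iff_of_nonneg (norm_nonneg _) two_ne_zero).mp h
  have hcomb : ∃ l₁ l₂ : ℝ, 0 ≤ l₁ ∧ 0 ≤ l₂ ∧ e = l₁ • ξ + l₂ • R ξ := by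
    refine ⟨(2 * ⟪e, ξ⟫)⁻¹, (2 * ⟪e, ξ⟫)⁻¹, by positivity, by positivity, ?_⟩
    rw [← smul_add, hR, add_sub_cancel, smul_smul, real_inner_comm e ξ,
      inv_mul_cancel₀ (by positivity), one_smul]
  have h := hcone ξ (R ξ) e hξ hnorm he hcomb hpos (hinner ▸ hpos)
  rwa [hinner, hsym ξ hξ, max_self] at h
end

section
/- Let a > b > 0 with a² > 2b², and define r : S¹ → ℝ on the unit circle of ℝ² by r(ξ) := ( ξ₁²/a² + ξ₂²/b² )^{-1/2}, the radial function of the ellipse x²/a² + y²/b² = 1. Then there exist e, ξ₁, ξ₂ ∈ S¹ and λ₁, λ₂ ≥ 0 with e = λ₁ξ₁ + λ₂ξ₂, ⟨e,ξ₁⟩ > 0, ⟨e,ξ₂⟩ > 0, and r(e) > max( r(ξ₁)/⟨e,ξ₁⟩ , r(ξ₂)/⟨e,ξ₂⟩ ). -/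
open scoped RealInnerProductSpace

/-!
Test the inequality at the end of the major axis, `e = (1, 0)`, where `r e = a`, against the two
symmetric directions `(c, s)` and `(c, -s)`. Both have the same ratio `r ξ / ⟪e, ξ⟫`, and with
`t = s²` and `k = a² / b²` this ratio is less than `a` exactly when `1 < (1 - t) (1 + (k - 1) t)`,
that is, when `0 < t < (k - 2) / (k - 1)`. Since `k > 2`, the value `t = (k - 2) / (2 k)` is
admissible.
-/

/-- The radial function of the ellipse in a direction `(c, s)` with `s² = (a² - 2b²) / (2a²)`,
divided by `c`, is smaller than the major semi-axis. -/
lemma radial_div_lt (a b c s : ℝ) (hb : 0 < b) (hab : b < a) (hecc : 2 * b ^ 2 < a ^ 2)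
    (hc : 0 < c) (hc2 : c ^ 2 = (a ^ 2 + 2 * b ^ 2) / (2 * a ^ 2))
    (hs2 : s ^ 2 = (a ^ 2 - 2 * b ^ 2) / (2 * a ^ 2)) :
    (Real.sqrt (c ^ 2 / a ^ 2 + s ^ 2 / b ^ 2))⁻¹ / c < a := by
  have ha : 0 < a := hb.trans hab
  have key : 1 / (a * c) < Real.sqrt (c ^ 2 / a ^ 2 + s ^ 2 / b ^ 2) := by
    apply Real.lt_sqrt_of_sq_lt
    rw [div_pow, mul_pow, hc2, hs2, ← sub_pos]
    have e : (a ^ 2 + 2 * b ^ 2) / (2 * a ^ 2) / a ^ 2 + (a ^ 2 - 2 * b ^ 2) / (2 * a ^ 2) / b ^ 2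
        - 1 ^ 2 / (a ^ 2 * ((a ^ 2 + 2 * b ^ 2) / (2 * a ^ 2)))
        = (a ^ 2 - 2 * b ^ 2) ^ 2 * (a ^ 2 + b ^ 2)
          / (2 * a ^ 4 * b ^ 2 * (a ^ 2 + 2 * b ^ 2)) := by
      field_simp
      ring
    rw [e]
    have hd : 0 < a ^ 2 - 2 * b ^ 2 := by linarith
    positivity
  have hpos : 0 < 1 / (a * c) := by positivity
  rw [div_lt_iff₀ hc]
  calc _ < (1 / (a * c))⁻¹ := inv_strictAnti₀ hpos key
    _ = a * c := by simp

/-- The radial function of an ellipse with eccentricity larger than `1/√2` (i.e. `a² > 2b²`)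
violates the cone inequality of Lemma 5. -/
theorem stmt_8 (a b : ℝ) (hb : 0 < b) (hab : b < a) (hecc : 2 * b ^ 2 < a ^ 2)
    (r : EuclideanSpace ℝ (Fin 2) → ℝ)
    (hr : ∀ ξ : EuclideanSpace ℝ (Fin 2),
      r ξ = (Real.sqrt (ξ 0 ^ 2 / a ^ 2 + ξ 1 ^ 2 / b ^ 2))⁻¹) :
    ∃ e ξ₁ ξ₂ : EuclideanSpace ℝ (Fin 2), ∃ l₁ l₂ : ℝ,
      ‖e‖ = 1 ∧ ‖ξ₁‖ = 1 ∧ ‖ξ₂‖ = 1 ∧ 0 ≤ l₁ ∧ 0 ≤ l₂ ∧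
      e = l₁ • ξ₁ + l₂ • ξ₂ ∧ 0 < ⟪e, ξ₁⟫ ∧ 0 < ⟪e, ξ₂⟫ ∧
      max (r ξ₁ / ⟪e, ξ₁⟫) (r ξ₂ / ⟪e, ξ₂⟫) < r e := by
  have ha : 0 < a := hb.trans hab
  have hcq : 0 < (a ^ 2 + 2 * b ^ 2) / (2 * a ^ 2) := by positivity
  have hsq : 0 ≤ (a ^ 2 - 2 * b ^ 2) / (2 * a ^ 2) :=
    div_nonneg (by linarith) (by positivity)
  obtain ⟨c, hc, hc2⟩ : ∃ c : ℝ, 0 < c ∧ c ^ 2 = (a ^ 2 + 2 * b ^ 2) / (2 * a ^ 2) :=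
    ⟨_, Real.sqrt_pos.2 hcq, Real.sq_sqrt hcq.le⟩
  obtain ⟨s, hs2⟩ : ∃ s : ℝ, s ^ 2 = (a ^ 2 - 2 * b ^ 2) / (2 * a ^ 2) :=
    ⟨_, Real.sq_sqrt hsq⟩
  have hcs : c ^ 2 + s ^ 2 = 1 := by
    rw [hc2, hs2]
    field_simp
    ring
  have h1 := radial_div_lt a b c s hb hab hecc hc hc2 hs2
  refine ⟨!₂[1, 0], !₂[c, s], !₂[c, -s], 1 / (2 * c), 1 / (2 * c), ?_, ?_, ?_, by positivity,
    by positivity, ?_, ?_, ?_, ?_⟩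
  · simp [EuclideanSpace.norm_eq]
  · simp [EuclideanSpace.norm_eq, hcs]
  · simp [EuclideanSpace.norm_eq, hcs]
  · ext i
    fin_cases i
    · simp
      field_simp
      norm_num
    · simp
  · simpa [PiLp.inner_apply] using hc
  · simpa [PiLp.inner_apply] using hc
  · have hre : r !₂[1, 0] = a := by
      simp [hr, Real.sqrt_inv, Real.sqrt_sq ha.le]
    rw [hre, hr, hr]
    simpa [PiLp.inner_apply] using h1
end

section
/- For every F > 0 and every 0 < K < C, there exist real numbers c > 0, α > 0, β > 0 and 0 < R₁ < R₂ < R₃ such that, setting c̃ := c + 1/R₁, the following hold: (i) β(exp(c̃(R₃ − R₂)) − 1) = K; (ii) (α/2)(R₂ − R₁)² = C − K; (iii) α(R₂ − R₁) = β·c̃·exp(c̃(R₃ − R₂)); (iv) α(1 + c̃(R₂ − R₁)) ≤ F. -/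
/-!
Write `d = R₂ - R₁`, `e = R₃ - R₂` and `t = c + 1 / R₁`. Normalising `exp (t * e) = 2`, i.e.
`e = log 2 / t`, turns the first equation into `β = K`; the second gives `α = 2 (C - K) / d ^ 2`,
and the third then becomes `t * d = (C - K) / K`. Only `d` is still free, and the inequality
reads `2 (C - K) C / (K d ^ 2) ≤ F`, which holds once `d` is large.
-/

/-- Solvability of the algebraic system arising in the proof of Lemma 4. -/
theorem stmt_10 (F K C : ℝ) (hF : 0 < F) (hK : 0 < K) (hKC : K < C) :
    ∃ c α β R₁ R₂ R₃ : ℝ, 0 < c ∧ 0 < α ∧ 0 < β ∧ 0 < R₁ ∧ R₁ < R₂ ∧ R₂ < R₃ ∧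
      β * (Real.exp ((c + 1 / R₁) * (R₃ - R₂)) - 1) = K ∧
      α / 2 * (R₂ - R₁) ^ 2 = C - K ∧
      α * (R₂ - R₁) = β * (c + 1 / R₁) * Real.exp ((c + 1 / R₁) * (R₃ - R₂)) ∧
      α * (1 + (c + 1 / R₁) * (R₂ - R₁)) ≤ F := by
  have hD : 0 < C - K := sub_pos.2 hKC
  have hC : 0 < C := hK.trans hKC
  obtain ⟨d, hd, hdF⟩ : ∃ d : ℝ, 0 < d ∧ 2 * (C - K) * C / K / d ^ 2 ≤ F := by
    have hA : 0 < 2 * (C - K) * C / K := by positivity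
    generalize 2 * (C - K) * C / K = A at hA
    refine ⟨1 + A / F, by positivity, ?_⟩
    have hq : 0 < A / F := by positivity
    have hqF : A / F * F = A := div_mul_cancel₀ _ hF.ne'
    rw [div_le_iff₀ (by positivity)]
    nlinarith [mul_pos hF hq, mul_pos hF (mul_pos hq hq)]
  obtain ⟨t, ht, htd⟩ : ∃ t : ℝ, 0 < t ∧ t * d = (C - K) / K :=
    ⟨(C - K) / K / d, by positivity, div_mul_cancel₀ _ hd.ne'⟩
  have hlog : 0 < Real.log 2 := Real.log_pos one_lt_two
  -- `c = t / 2` and `R₁ = 2 / t` split the speed `t` evenly between `c` and `1 / R₁`.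
  refine ⟨t / 2, 2 * (C - K) / d ^ 2, K, 2 / t, 2 / t + d, 2 / t + d + Real.log 2 / t,
    by positivity, by positivity, hK, by positivity, by linarith,
    lt_add_of_pos_right _ (by positivity), ?_⟩
  have h1 : t / 2 + 1 / (2 / t) = t := by rw [one_div_div]; ring
  have h2 : 2 / t + d + Real.log 2 / t - (2 / t + d) = Real.log 2 / t := by ring
  have h3 : 2 / t + d - 2 / t = d := by ring
  have h4 : t * (Real.log 2 / t) = Real.log 2 := mul_div_cancel₀ _ ht.ne'
  have htd' : t * d * K = C - K := by rw [htd, div_mul_cancel₀ _ hK.ne']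
  rw [h1, h2, h3, h4, Real.exp_log two_pos]
  refine ⟨by ring, by field_simp, ?_, ?_⟩
  · rw [← htd']
    field_simp
  · convert hdF using 1
    rw [htd]
    field_simp
    ring
end

section
/- Let θ ∈ (0,1) and let f : ℝ → ℝ be continuous with f(s) = 0 for s ≤ θ, f(s) > 0 for s ∈ (θ,1), and f(1) = 0. Then there exist c > 0, radii 0 < R₁ < R₂ < R₃, a constant C ∈ (θ,1), and a function h : [0,R₃] → ℝ such that: h is continuously differentiable on [0,R₃]; h is nonincreasing; h(r) = C for all r ∈ [0,R₁]; h(R₂) ∈ (θ, C); h(R₃) = 0; h(r) > 0 for r ∈ [0,R₃); and for every r ∈ (0,R₃) with r ∉ {R₁, R₂}, h is twice differentiable at r and h''(r) + (c + 1/R₁)·h'(r) + f(h(r)) ≥ 0. -/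
/-!
Write `k = c + 1 / R₁`, `δ = R₂ - R₁` and `D = h R₂`. The profile is `C` up to `R₁`, then
`C - a (r - R₁) ^ 2` up to `R₂`, then `D (2 exp (-k (r - R₂)) - 1)`, which vanishes at
`R₃ = R₂ + log 2 / k`; so the amplitude `β` of the exponential branch is taken equal to `D`.

Matching values and slopes at `R₂` amounts to `a δ² = C - D` and `a δ = k D`, which determine `a` and
`k` in terms of `δ`. On the exponential branch `h'' + k h' = 0`, and `f (h r) ≥ 0` since
`h ≤ C < 1`. On the parabola `h` takes values in `[D, C] ⊆ (θ, 1)`, where `f` has a positive minimum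
`m`, and `h'' + k h' ≥ -2 a (1 + k δ)`. Here `k δ = (C - D) / D` is independent of `δ` while
`a = (C - D) / δ²`, so a large `δ` makes `2 a (1 + k δ) ≤ m`. Finally `c = k / 2`, `R₁ = 2 / k`.
-/

/-- Gluing two differentiable functions whose values and derivatives agree at `b`. -/
lemma hasDerivAt_glue {u u' v v' : ℝ → ℝ} {b : ℝ} (hu : ∀ x, HasDerivAt u (u' x) x)
    (hv : ∀ x, HasDerivAt v (v' x) x) (hb : u b = v b) (hb' : u' b = v' b) (x : ℝ) :
    HasDerivAt (fun r => if r ≤ b then u r else v r) (if x ≤ b then u' x else v' x) x := by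
  rcases lt_trichotomy x b with hx | rfl | hx
  · rw [if_pos hx.le]
    refine (hu x).congr_of_eventuallyEq ?_
    filter_upwards [Iio_mem_nhds hx] with r hr
    exact if_pos (le_of_lt hr)
  · rw [if_pos le_rfl]
    have h1 : HasDerivWithinAt (fun r => if r ≤ x then u r else v r) (u' x) (Set.Iic x) x :=
      (hu x).hasDerivWithinAt.congr (fun r hr => if_pos hr) (if_pos le_rfl)
    have h2 : HasDerivWithinAt (fun r => if r ≤ x then u r else v r) (u' x) (Set.Ici x) x := by
      rw [hb']
      refine (hv x).hasDerivWithinAt.congr (fun r hr => ?_) ((if_pos le_rfl).trans hb)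
      rcases eq_or_lt_of_le (show x ≤ r from hr) with rfl | hr
      · exact (if_pos le_rfl).trans hb
      · exact if_neg hr.not_ge
    have h3 := h1.union h2
    rwa [Set.Iic_union_Ici, hasDerivWithinAt_univ] at h3
  · rw [if_neg hx.not_ge]
    refine (hv x).congr_of_eventuallyEq ?_
    filter_upwards [Ioi_mem_nhds hx] with r hr
    exact if_neg (not_le.2 hr)

/-- The profile: constant, then a parabola, then an exponential. The exponential branch is continued
past its zero so that the function is `C¹` on the whole line. -/
noncomputable def profile (C D a k R₁ R₂ : ℝ) (r : ℝ) : ℝ :=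
  if r ≤ R₁ then C else
    if r ≤ R₂ then C - a * (r - R₁) ^ 2 else D * (2 * Real.exp (-k * (r - R₂)) - 1)

/-- The derivative of `profile`, when the branches match to first order. -/
noncomputable def profileDeriv (D a k R₁ R₂ : ℝ) (r : ℝ) : ℝ :=
  if r ≤ R₁ then 0 else
    if r ≤ R₂ then -2 * a * (r - R₁) else -2 * k * D * Real.exp (-k * (r - R₂))

lemma hasDerivAt_profile {C D a k R₁ R₂ : ℝ} (h12 : R₁ < R₂)
    (hval : a * (R₂ - R₁) ^ 2 = C - D) (hslope : a * (R₂ - R₁) = k * D) (x : ℝ) :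
    HasDerivAt (profile C D a k R₁ R₂) (profileDeriv D a k R₁ R₂ x) x := by
  have hpar : ∀ x, HasDerivAt (fun r => C - a * (r - R₁) ^ 2) (-2 * a * (x - R₁)) x := by
    intro x
    have h := (((((hasDerivAt_id x).sub_const R₁).pow 2).const_mul a).const_sub C)
    refine h.congr_deriv ?_
    simp
    ring
  have hexp : ∀ x, HasDerivAt (fun r => D * (2 * Real.exp (-k * (r - R₂)) - 1))
      (-2 * k * D * Real.exp (-k * (x - R₂))) x := by
    intro x
    have h := ((((((hasDerivAt_id x).sub_const R₂).const_mul (-k)).exp).const_mul 2).sub_const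
      1).const_mul D
    refine h.congr_deriv ?_
    simp
    ring
  refine hasDerivAt_glue (u := fun _ => C) (u' := fun _ => 0) (fun x => hasDerivAt_const x C)
    (hasDerivAt_glue hpar hexp ?_ ?_) ?_ ?_ x
  · simp
    linarith
  · simp
    linarith
  · simp [h12.le]
  · simp [h12.le]

lemma continuous_profileDeriv {D a k R₁ R₂ : ℝ} (h12 : R₁ < R₂)
    (hslope : a * (R₂ - R₁) = k * D) : Continuous (profileDeriv D a k R₁ R₂) := by
  refine Continuous.if_le continuous_const (Continuous.if_le (by fun_prop) (by fun_prop)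
    continuous_id continuous_const ?_) continuous_id continuous_const ?_
  · rintro x rfl
    simp
    linarith
  · rintro x rfl
    simp [h12.le]

lemma profileDeriv_nonpos {D a k R₁ R₂ : ℝ} (hD : 0 < D) (ha : 0 < a) (hk : 0 < k) (x : ℝ) :
    profileDeriv D a k R₁ R₂ x ≤ 0 := by
  unfold profileDeriv
  split_ifs with h1 h2
  · exact le_rfl
  · nlinarith [mul_pos ha (sub_pos.2 (not_le.1 h1))]
  · have := mul_pos (mul_pos hk hD) (Real.exp_pos (-k * (x - R₂)))
    linarith

/-- The claim for given matching parameters, with `m` a lower bound of `f` on `[D, C]`. -/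
lemma exists_profile {θ C D a k m δ : ℝ} {f : ℝ → ℝ} (hθ : 0 < θ)
    (hf0 : ∀ s : ℝ, s ≤ θ → f s = 0) (hfpos : ∀ s ∈ Set.Ioo θ 1, 0 < f s)
    (hθD : θ < D) (hDC : D < C) (hC : C < 1)
    (ha : 0 < a) (hk : 0 < k) (hδ : 0 < δ) (hm : ∀ s ∈ Set.Icc D C, m ≤ f s)
    (hval : a * δ ^ 2 = C - D) (hslope : a * δ = k * D) (ham : 2 * a * (1 + k * δ) ≤ m) :
    ∃ (c R₁ R₂ R₃ C : ℝ) (h : ℝ → ℝ),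
      0 < c ∧ 0 < R₁ ∧ R₁ < R₂ ∧ R₂ < R₃ ∧ C ∈ Set.Ioo θ 1 ∧
      ContDiffOn ℝ 1 h (Set.Icc 0 R₃) ∧
      AntitoneOn h (Set.Icc 0 R₃) ∧
      (∀ r ∈ Set.Icc 0 R₁, h r = C) ∧
      h R₂ ∈ Set.Ioo θ C ∧
      h R₃ = 0 ∧
      (∀ r ∈ Set.Ico 0 R₃, 0 < h r) ∧
      (∀ r ∈ Set.Ioo 0 R₃, r ≠ R₁ → r ≠ R₂ →
        DifferentiableAt ℝ h r ∧ DifferentiableAt ℝ (deriv h) r ∧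
        0 ≤ deriv (deriv h) r + (c + 1 / R₁) * deriv h r + f (h r)) := by
  obtain ⟨R₁, hR₁⟩ : ∃ R₁, R₁ = 2 / k := ⟨_, rfl⟩
  obtain ⟨R₂, hR₂⟩ : ∃ R₂, R₂ = R₁ + δ := ⟨_, rfl⟩
  obtain ⟨R₃, hR₃⟩ : ∃ R₃, R₃ = R₂ + Real.log 2 / k := ⟨_, rfl⟩
  have hR₁pos : 0 < R₁ := by rw [hR₁]; positivity
  have hck : k / 2 + 1 / R₁ = k := by rw [hR₁, one_div_div]; ring
  have hlog : 0 < Real.log 2 := Real.log_pos (by norm_num)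
  have h12 : R₁ < R₂ := by linarith
  have h23 : R₂ < R₃ := by rw [hR₃]; linarith [div_pos hlog hk]
  have hkR : k * (R₃ - R₂) = Real.log 2 := by
    rw [hR₃]
    field_simp
    ring
  have hδR : R₂ - R₁ = δ := by rw [hR₂]; ring
  have hD : 0 < D := hθ.trans hθD
  have hder := hasDerivAt_profile (C := C) (D := D) (a := a) (k := k) h12 (by rwa [hδR])
    (by rwa [hδR])
  have hderiv : deriv (profile C D a k R₁ R₂) = profileDeriv D a k R₁ R₂ :=
    funext fun x => (hder x).deriv
  have hanti : Antitone (profile C D a k R₁ R₂) :=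
    antitone_of_deriv_nonpos (fun x => (hder x).differentiableAt)
      (fun x => by rw [hderiv]; exact profileDeriv_nonpos hD ha hk x)
  have hconst : ∀ r ≤ R₁, profile C D a k R₁ R₂ r = C := fun r hr => if_pos hr
  have hhR₂ : profile C D a k R₁ R₂ R₂ = D := by
    simp only [profile, if_neg h12.not_ge, le_refl, if_true, hδR]
    linarith
  have hleC : ∀ r, profile C D a k R₁ R₂ r ≤ C := fun r =>
    (hanti (min_le_left r R₁)).trans_eq (hconst _ (min_le_right r R₁))
  have hf_nonneg : ∀ r, 0 ≤ f (profile C D a k R₁ R₂ r) := fun r => by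
    rcases le_or_gt (profile C D a k R₁ R₂ r) θ with h | h
    · exact (hf0 _ h).ge
    · exact (hfpos _ ⟨h, (hleC r).trans_lt hC⟩).le
  refine ⟨k / 2, R₁, R₂, R₃, C, profile C D a k R₁ R₂, by positivity, hR₁pos, h12, h23,
    ⟨hθD.trans hDC, hC⟩, ?_, hanti.antitoneOn _, fun r hr => hconst r hr.2, ?_, ?_, ?_, ?_⟩
  · refine ContDiff.contDiffOn (contDiff_one_iff_deriv.2
      ⟨fun x => (hder x).differentiableAt, ?_⟩)
    rw [hderiv]
    exact continuous_profileDeriv h12 (by rwa [hδR])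
  · rw [hhR₂]
    exact ⟨hθD, hDC⟩
  · simp only [profile, if_neg (h12.trans h23).not_ge, if_neg h23.not_ge, neg_mul, hkR,
      Real.exp_neg, Real.exp_log two_pos]
    norm_num
  · intro r hr
    rcases le_or_gt r R₂ with h | h
    · exact hD.trans_le (hhR₂.ge.trans (hanti h))
    · simp only [profile, if_neg (h12.trans h).not_ge, if_neg h.not_ge]
      refine mul_pos hD ?_
      have h1 : Real.exp (-Real.log 2) < Real.exp (-k * (r - R₂)) := by
        rw [Real.exp_lt_exp]
        nlinarith [mul_lt_mul_of_pos_left hr.2 hk]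
      rw [Real.exp_neg, Real.exp_log two_pos] at h1
      linarith
  · intro r hr hr1 hr2
    rw [hck, hderiv]
    refine ⟨(hder r).differentiableAt, ?_⟩
    rcases lt_or_gt_of_ne hr1 with h1 | h1
    · have hd : HasDerivAt (profileDeriv D a k R₁ R₂) 0 r := by
        refine (hasDerivAt_const r (0 : ℝ)).congr_of_eventuallyEq ?_
        filter_upwards [Iio_mem_nhds h1] with x hx
        exact if_pos (le_of_lt hx)
      refine ⟨hd.differentiableAt, ?_⟩
      rw [hd.deriv, profileDeriv, if_pos h1.le]
      linarith [hf_nonneg r]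
    rcases lt_or_gt_of_ne hr2 with h2 | h2
    · have hd : HasDerivAt (profileDeriv D a k R₁ R₂) (-2 * a) r := by
        have h := ((hasDerivAt_id r).sub_const R₁).const_mul (-2 * a)
        rw [mul_one] at h
        refine h.congr_of_eventuallyEq ?_
        filter_upwards [Ioo_mem_nhds h1 h2] with x hx
        simp [profileDeriv, hx.1.not_ge, hx.2.le]
      refine ⟨hd.differentiableAt, ?_⟩
      have hfm := hm _ ⟨hhR₂.ge.trans (hanti h2.le), hleC r⟩
      have hlin : a * k * (r - R₁) ≤ a * k * δ :=
        mul_le_mul_of_nonneg_left (by linarith) (by positivity)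
      rw [hd.deriv, profileDeriv, if_neg h1.not_ge, if_pos h2.le]
      nlinarith
    · have hd : HasDerivAt (profileDeriv D a k R₁ R₂)
          (2 * k ^ 2 * D * Real.exp (-k * (r - R₂))) r := by
        have h := ((((hasDerivAt_id r).sub_const R₂).const_mul (-k)).exp).const_mul (-2 * k * D)
        refine (h.congr_of_eventuallyEq ?_).congr_deriv ?_
        · filter_upwards [Ioi_mem_nhds h2] with x hx
          simp [profileDeriv, (h12.trans hx).not_ge, not_le.2 (show R₂ < x from hx)]
        · simp
          ring
      refine ⟨hd.differentiableAt, ?_⟩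
      have hzero : 2 * k ^ 2 * D * Real.exp (-k * (r - R₂)) +
          k * profileDeriv D a k R₁ R₂ r = 0 := by
        rw [profileDeriv, if_neg h1.not_ge, if_neg h2.not_ge]
        ring
      rw [hd.deriv, hzero, zero_add]
      exact hf_nonneg r

/-- The one-dimensional profile construction of Lemma 4: a `C¹`, nonincreasing profile `h`,
constant near the origin, vanishing at `R₃`, positive before `R₃`, and satisfying
`h'' + (c + 1/R₁) h' + f(h) ≥ 0` away from the two junction radii. -/
theorem stmt_11 (θ : ℝ) (hθ : θ ∈ Set.Ioo (0 : ℝ) 1) (f : ℝ → ℝ)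
    (hfc : Continuous f) (hf0 : ∀ s : ℝ, s ≤ θ → f s = 0)
    (hfpos : ∀ s ∈ Set.Ioo θ 1, 0 < f s) (hf1 : f 1 = 0) :
    ∃ (c R₁ R₂ R₃ C : ℝ) (h : ℝ → ℝ),
      0 < c ∧ 0 < R₁ ∧ R₁ < R₂ ∧ R₂ < R₃ ∧ C ∈ Set.Ioo θ 1 ∧
      ContDiffOn ℝ 1 h (Set.Icc 0 R₃) ∧
      AntitoneOn h (Set.Icc 0 R₃) ∧
      (∀ r ∈ Set.Icc 0 R₁, h r = C) ∧
      h R₂ ∈ Set.Ioo θ C ∧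
      h R₃ = 0 ∧
      (∀ r ∈ Set.Ico 0 R₃, 0 < h r) ∧
      (∀ r ∈ Set.Ioo 0 R₃, r ≠ R₁ → r ≠ R₂ →
        DifferentiableAt ℝ h r ∧ DifferentiableAt ℝ (deriv h) r ∧
        0 ≤ deriv (deriv h) r + (c + 1 / R₁) * deriv h r + f (h r)) := by
  obtain ⟨hθ0, hθ1⟩ := hθ
  obtain ⟨C, hθC, hC⟩ := exists_between hθ1
  obtain ⟨D, hθD, hDC⟩ := exists_between hθC
  have hD : 0 < D := hθ0.trans hθD
  have hCD : 0 < C - D := sub_pos.2 hDC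
  obtain ⟨s₀, hs₀, hmin⟩ :=
    isCompact_Icc.exists_isMinOn (Set.nonempty_Icc.2 hDC.le) hfc.continuousOn
  have hm : 0 < f s₀ := hfpos s₀ ⟨hθD.trans_le hs₀.1, hs₀.2.trans_lt hC⟩
  -- `δ ≥ 1` gives `δ ≤ δ ^ 2`, so a bound linear in `δ` suffices for `2 a (1 + k δ) ≤ f s₀`.
  obtain ⟨δ, hδ⟩ : ∃ δ, δ = 2 * (C - D) * (1 + (C - D) / D) / f s₀ + 1 := ⟨_, rfl⟩
  have hδ1 : 1 ≤ δ := by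
    rw [hδ]
    exact le_add_of_nonneg_left (by positivity)
  have hδ0 : 0 < δ := one_pos.trans_le hδ1
  refine exists_profile (C := C) (D := D) (a := (C - D) / δ ^ 2) (k := (C - D) / (D * δ))
    (m := f s₀) (δ := δ) hθ0 hf0 hfpos hθD hDC hC (by positivity) (by positivity) hδ0
    (fun s hs => hmin hs) (by field_simp) (by field_simp) ?_
  have hkδ : (C - D) / (D * δ) * δ = (C - D) / D := by field_simp
  have hlin : 2 * (C - D) * (1 + (C - D) / D) ≤ δ * f s₀ := by
    rw [hδ, add_mul, div_mul_cancel₀ _ hm.ne']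
    linarith
  calc 2 * ((C - D) / δ ^ 2) * (1 + (C - D) / (D * δ) * δ)
      = 2 * (C - D) * (1 + (C - D) / D) / δ ^ 2 := by rw [hkδ]; ring
    _ ≤ f s₀ := by
      rw [div_le_iff₀ (by positivity)]
      nlinarith [mul_le_mul_of_nonneg_right hδ1 (mul_pos hδ0 hm).le]
end

section
/- Let α ∈ (1/2, 1), β ∈ (0, 1/2), and n ∈ ℕ. Let γ : [0,1] → ℝ² be a continuous path with γ(0) = (0,0) and γ(1) = (n,n), and suppose that for every t ∈ [0,1] and every k ∈ ℤ², γ(t) ∉ k + (1−α, α) × [β, 1−β]. Then the length of γ (its total variation on [0,1]) is at least 2n(α − β). -/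
/-!
The proof is a calibration argument. For `0 < a ≤ b < 1` let `ramp a b : ℝ → ℝ` be the continuous
function with slope `1` on `ℤ + [a, b]` and slope `0` elsewhere; it is monotone, `1`-Lipschitz
(`ramp_sub_mem`) and gains `b - a` per period (`ramp_natCast`). Fix `c ∈ (1/2, α)` and consider
`φ(x, y) = ramp (1 - c) c x + ramp β (1 - β) y`.

Both ramps can only vary near a point `(x, y)` if `x ∈ ℤ + [1 - c, c]` and `y ∈ ℤ + [β, 1 - β]`
(`eventually_ramp_eq`), and this never happens along the path, since `[1 - c, c] ⊆ (1 - α, α)`.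
Hence near every time one of the two summands of `φ ∘ γ` is constant, so locally the increments of
`φ ∘ γ` are bounded by those of `γ`; by compactness of `[0, 1]` the length of `γ` is at least
`φ(n, n) - φ(0, 0) = n (2c - 1) + n (1 - 2β) = 2n (c - β)` (`edist_le_eVariationOn_of_local`).
Letting `c ↑ α` gives the claim. Working with `c < α` is essential: for `c = α` the local
comparison with straight-line distances fails at corners of the rectangles.
-/

open Set Filter Topology

/-- The function with slope `1` on `ℤ + [a, b]` and slope `0` elsewhere (for `0 ≤ a ≤ b ≤ 1`),
normalised by `ramp a b 0 = a`. -/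
noncomputable def ramp (a b x : ℝ) : ℝ := ⌊x⌋ * (b - a) + max a (min b (Int.fract x))

lemma ramp_natCast {a b : ℝ} (ha : 0 < a) (hab : a ≤ b) (n : ℕ) :
    ramp a b n = n * (b - a) + a := by
  have : min b 0 = 0 := min_eq_right (by linarith)
  simp [ramp, this, ha.le]

/-- `ramp a b` is monotone and `1`-Lipschitz. -/
lemma ramp_sub_mem {a b : ℝ} (ha : 0 < a) (hab : a ≤ b) (hb : b < 1) {x y : ℝ} (hxy : x ≤ y) :
    ramp a b y - ramp a b x ∈ Icc 0 (y - x) := by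
  have hx := Int.floor_add_fract x
  have hy := Int.floor_add_fract y
  have hx0 := Int.fract_nonneg x
  have hy0 := Int.fract_nonneg y
  have hx1 := Int.fract_lt_one x
  have hy1 := Int.fract_lt_one y
  have hfl : ⌊x⌋ ≤ ⌊y⌋ := Int.floor_le_floor hxy
  unfold ramp
  generalize Int.fract x = r at *
  generalize Int.fract y = s at *
  generalize ⌊x⌋ = k at *
  generalize ⌊y⌋ = l at *
  subst hx hy
  rcases hfl.eq_or_lt with rfl | h
  · have : r ≤ s := by linarith
    constructor <;> (simp only [max_def, min_def]; split_ifs <;> linarith)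
  · have h' : (k : ℝ) + 1 ≤ l := by exact_mod_cast h
    have h1 : 0 ≤ ((l : ℝ) - k - 1) * (b - a) :=
      mul_nonneg (by linarith) (by linarith)
    have h2 : 0 ≤ ((l : ℝ) - k - 1) * (1 - (b - a)) :=
      mul_nonneg (by linarith) (by linarith)
    constructor <;> (simp only [max_def, min_def]; split_ifs <;> nlinarith)

lemma dist_ramp_le {a b : ℝ} (ha : 0 < a) (hab : a ≤ b) (hb : b < 1) (x y : ℝ) :
    dist (ramp a b x) (ramp a b y) ≤ dist x y := by
  rw [Real.dist_eq, Real.dist_eq]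
  rcases le_total x y with h | h
  · have := ramp_sub_mem ha hab hb h
    rw [abs_sub_comm, abs_of_nonneg this.1, abs_sub_comm, abs_of_nonneg (by linarith)]
    exact this.2
  · have := ramp_sub_mem ha hab hb h
    rw [abs_of_nonneg this.1, abs_of_nonneg (by linarith)]
    exact this.2

lemma ramp_eq_of_mem_gap {a b : ℝ} (ha : 0 < a) (hab : a ≤ b) (hb : b < 1) (k : ℤ) {z : ℝ}
    (hz : z ∈ Ioo (k - 1 + b) (k + a)) : ramp a b z = k * (b - a) + a := by
  obtain ⟨h1, h2⟩ := hz
  rcases le_or_gt (k : ℝ) z with h | h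
  · have hf : ⌊z⌋ = k := Int.floor_eq_iff.2 ⟨h, by linarith⟩
    have hr : Int.fract z = z - k := by rw [Int.fract, hf]
    rw [ramp, hr, hf, min_eq_right (by linarith), max_eq_left (by linarith)]
  · have hf : ⌊z⌋ = k - 1 := Int.floor_eq_iff.2 ⟨by push_cast; linarith, by push_cast; linarith⟩
    have hr : Int.fract z = z - (k - 1) := by rw [Int.fract, hf]; push_cast; ring
    rw [ramp, hr, hf, min_eq_left (by linarith), max_eq_right (by linarith)]
    push_cast; ring

/-- `ramp a b` is locally constant off `ℤ + [a, b]`. -/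
lemma eventually_ramp_eq {a b : ℝ} (ha : 0 < a) (hab : a ≤ b) (hb : b < 1) {x : ℝ}
    (hx : ∀ k : ℤ, x - k ∉ Icc a b) : ∀ᶠ z in 𝓝 x, ramp a b z = ramp a b x := by
  obtain ⟨k, hk⟩ : ∃ k : ℤ, x ∈ Ioo (k - 1 + b) (k + a) := by
    have h0 := Int.floor_le x
    have h1 := Int.lt_floor_add_one x
    rcases lt_or_ge (x - ⌊x⌋) a with h | h
    · exact ⟨⌊x⌋, by linarith, by linarith⟩
    · have : b < x - ⌊x⌋ := not_le.1 fun h' => hx _ ⟨h, h'⟩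
      exact ⟨⌊x⌋ + 1, by push_cast; linarith, by push_cast; linarith⟩
  filter_upwards [isOpen_Ioo.mem_nhds hk] with z hz
  rw [ramp_eq_of_mem_gap ha hab hb k hz, ramp_eq_of_mem_gap ha hab hb k hk]

/-- If near every time the increments of `φ` are bounded by those of `γ`, then the total increment
of `φ` is at most the total variation of `γ`. -/
lemma edist_le_eVariationOn_of_local {E F : Type*} [PseudoEMetricSpace E] [PseudoEMetricSpace F]
    {γ : ℝ → E} {φ : ℝ → F}
    (h : ∀ t ∈ Icc (0 : ℝ) 1, ∃ V ∈ 𝓝[Icc 0 1] t, ∀ s ∈ V, ∀ s' ∈ V,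
      edist (φ s) (φ s') ≤ edist (γ s) (γ s')) :
    edist (φ 0) (φ 1) ≤ eVariationOn γ (Icc 0 1) := by
  choose! V hV hφ using h
  obtain ⟨t, ht0, htm, ⟨m, hm⟩, ht⟩ := exists_monotone_Icc_subset_open_cover_Icc
    (a := (0 : ℝ)) (b := 1) zero_le_one
    (c := fun i : Icc (0 : ℝ) 1 => interior ((↑) ⁻¹' V i)) (fun _ => isOpen_interior)
    (fun i _ => mem_iUnion.2 ⟨i, mem_interior_iff_mem_nhds.2
      (preimage_coe_mem_nhds_subtype.2 (hV i i.2))⟩)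
  calc edist (φ 0) (φ 1) = edist (φ (t 0)) (φ (t m)) := by rw [ht0, hm m le_rfl]
    _ ≤ ∑ i ∈ Finset.range m, edist (φ (t i)) (φ (t (i + 1))) :=
        edist_le_range_sum_edist (fun i => φ (t i)) m
    _ ≤ ∑ i ∈ Finset.range m, edist (γ (t (i + 1))) (γ (t i)) := by
        refine Finset.sum_le_sum fun i _ => ?_
        obtain ⟨j, hj⟩ := ht i
        have hle := htm i.le_succ
        rw [edist_comm (γ _)]
        have hl := interior_subset (hj (left_mem_Icc.2 hle))
        have hr := interior_subset (hj (right_mem_Icc.2 hle))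
        exact hφ j j.2 _ hl _ hr
    _ ≤ eVariationOn γ (Icc 0 1) :=
        eVariationOn.sum_le (f := γ) (u := fun i => (t i : ℝ)) htm (fun i => (t i).2)

/-- Geodesic-distance lower bound: a continuous path in `ℝ²` from `(0,0)` to `(n,n)`
avoiding the `ℤ²`-periodic array of rectangles `(1-α, α) × [β, 1-β]` has length (total
variation) at least `2n(α - β)`. -/
theorem stmt_14 (α β : ℝ) (hα : α ∈ Set.Ioo (1 / 2 : ℝ) 1)
    (hβ : β ∈ Set.Ioo (0 : ℝ) (1 / 2)) (n : ℕ)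
    (γ : ℝ → EuclideanSpace ℝ (Fin 2))
    (hcont : ContinuousOn γ (Set.Icc 0 1))
    (h0 : γ 0 = 0) (h1 : ∀ i : Fin 2, γ 1 i = n)
    (havoid : ∀ t ∈ Set.Icc (0 : ℝ) 1, ∀ k : ℤ × ℤ,
      ¬(γ t 0 - (k.1 : ℝ) ∈ Set.Ioo (1 - α) α ∧
        γ t 1 - (k.2 : ℝ) ∈ Set.Icc β (1 - β))) :
    ENNReal.ofReal (2 * n * (α - β)) ≤ eVariationOn γ (Set.Icc 0 1) := by
  obtain ⟨hα1, hα2⟩ := hα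
  obtain ⟨hβ1, hβ2⟩ := hβ
  have key : ∀ c ∈ Ioo (1 / 2 : ℝ) α,
      ENNReal.ofReal (2 * n * (c - β)) ≤ eVariationOn γ (Icc 0 1) := by
    rintro c ⟨hc1, hc2⟩
    have hco : ∀ i : Fin 2, ContinuousOn (fun t => γ t i) (Icc 0 1) := fun i =>
      (EuclideanSpace.proj (𝕜 := ℝ) i).continuous.comp_continuousOn hcont
    have hle : ∀ (i : Fin 2) (s s' : ℝ), dist (γ s i) (γ s' i) ≤ dist (γ s) (γ s') :=
      fun i s s' => by
        simpa [dist_eq_norm] using PiLp.norm_apply_le (γ s - γ s') i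
    have hLf := dist_ramp_le (a := 1 - c) (b := c) (by linarith) (by linarith) (by linarith)
    have hLg := dist_ramp_le (a := β) (b := 1 - β) (by linarith) (by linarith) (by linarith)
    have hloc := edist_le_eVariationOn_of_local (γ := γ)
      (φ := fun t => ramp (1 - c) c (γ t 0) + ramp β (1 - β) (γ t 1)) ?_
    · refine le_trans (le_of_eq ?_) hloc
      have hf0 := ramp_natCast (a := 1 - c) (b := c) (by linarith) (by linarith) 0
      have hg0 := ramp_natCast (a := β) (b := 1 - β) (by linarith) (by linarith) 0
      have hfn := ramp_natCast (a := 1 - c) (b := c) (by linarith) (by linarith) n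
      have hgn := ramp_natCast (a := β) (b := 1 - β) (by linarith) (by linarith) n
      rw [Nat.cast_zero] at hf0 hg0
      have hn : (0 : ℝ) ≤ 2 * n * (c - β) := mul_nonneg (by positivity) (by linarith)
      simp only [h0, h1, PiLp.zero_apply]
      rw [hf0, hg0, hfn, hgn, edist_dist, Real.dist_eq, abs_sub_comm, ← abs_of_nonneg hn]
      congr 2
      ring
    · intro t ht
      by_cases hx : ∀ k : ℤ, γ t 0 - k ∉ Icc (1 - c) c
      · refine ⟨_, hco 0 t ht (eventually_ramp_eq (by linarith) (by linarith) (by linarith) hx),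
          fun s hs s' hs' => ?_⟩
        simp only [mem_preimage, mem_ofPred_eq] at hs hs'
        rw [hs, hs', edist_dist, edist_dist, dist_add_left]
        exact ENNReal.ofReal_le_ofReal ((hLg _ _).trans (hle 1 s s'))
      · push Not at hx
        obtain ⟨k, hk1, hk2⟩ := hx
        have hy : ∀ l : ℤ, γ t 1 - l ∉ Icc β (1 - β) := fun l hl =>
          havoid t ht (k, l) ⟨⟨by linarith, by linarith⟩, hl⟩
        refine ⟨_, hco 1 t ht (eventually_ramp_eq (by linarith) (by linarith) (by linarith) hy),
          fun s hs s' hs' => ?_⟩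
        simp only [mem_preimage, mem_ofPred_eq] at hs hs'
        rw [hs, hs', edist_dist, edist_dist, dist_add_right]
        exact ENNReal.ofReal_le_ofReal ((hLf _ _).trans (hle 0 s s'))
  have hlim : Tendsto (fun c : ℝ => ENNReal.ofReal (2 * n * (c - β))) (𝓝[<] α)
      (𝓝 (ENNReal.ofReal (2 * n * (α - β)))) :=
    ((ENNReal.continuous_ofReal.comp (by fun_prop)).tendsto α).mono_left nhdsWithin_le_nhds
  refine le_of_tendsto hlim ?_
  filter_upwards [Ioo_mem_nhdsLT hα1] with c hc using key c hc
end
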